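/- Let L ≥ 3 be an integer, λ > 0, q := 2/L, and let φ_m(ρ) := (m − ρ)² + λ|ρ|^q for ρ ∈ ℝ. If m ∈ ℝ satisfies |m| ≠ τ, where τ := (1 − q/2)·λ^{1/(2−q)}·(1 − q)^{(q−1)/(2−q)}, then φ_m has a unique global minimizer over ℝ. -/

import Mathlib

/-- `φ_m(ρ) = (m − ρ)² + λ|ρ|^q`. -/
noncomputable def phi (m lam q ρ : ℝ) : ℝ := (m - ρ) ^ 2 + lam * |ρ| ^ q

/-!
By the symmetry `φ_{-m}(-ρ) = φ_m(ρ)` we may take `m ≥ 0`, and then every minimizer is nonnegative.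
Two positive minimizers cannot coexist: `φ_m'` is strictly convex on `(0, ∞)` and would vanish at
both of them and, by Rolle, at a third point in between. If `0` and some `b > 0` are both
minimizers, then `φ_m'(b) = 0` and `φ_m(b) = φ_m(0)` give `b^(2-q) = λ(1-q)` and
`m = (1 - q/2) b / (1 - q)`, which is `τ`.
-/

open Set Filter Topology

theorem strictConvexOn_const_mul {E : Type*} [AddCommMonoid E] [Module ℝ E] {s : Set E}
    {f : E → ℝ} {c : ℝ} (hc : 0 < c) (hf : StrictConvexOn ℝ s f) :
    StrictConvexOn ℝ s fun x ↦ c * f x := by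
  refine ⟨hf.1, fun x hx y hy hxy a b ha hb hab ↦ ?_⟩
  calc c * f (a • x + b • y)
      < c * (a • f x + b • f y) := mul_lt_mul_of_pos_left (hf.2 hx hy hxy ha hb hab) hc
    _ = a • (c * f x) + b • (c * f y) := by simp only [smul_eq_mul]; ring

theorem strictConvexOn_rpow_of_neg {p : ℝ} (hp : p < 0) :
    StrictConvexOn ℝ (Ioi 0) fun x : ℝ ↦ x ^ p := by
  have hcont : ContinuousOn (fun x : ℝ ↦ x ^ p) (Ioi 0) :=
    continuousOn_id.rpow_const fun x hx ↦ Or.inl (ne_of_gt hx)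
  refine StrictMonoOn.strictConvexOn_of_deriv (convex_Ioi 0) hcont ?_
  rw [interior_Ioi]
  intro x (hx : 0 < x) y _ hxy
  rw [Real.deriv_rpow_const, Real.deriv_rpow_const]
  exact mul_lt_mul_of_neg_left (Real.rpow_lt_rpow_of_neg hx hxy (by linarith)) hp

theorem isMinOn_unique_of_strictConvexOn_deriv {f : ℝ → ℝ} {s : Set ℝ} {a b : ℝ} (hs : IsOpen s)
    (hf : ContinuousOn f s) (hf' : StrictConvexOn ℝ s (deriv f)) (has : a ∈ s) (hbs : b ∈ s)
    (ha : IsMinOn f s a) (hb : IsMinOn f s b) : a = b := by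
  wlog hab : a ≤ b generalizing a b
  · exact (this hbs has hb ha (le_of_not_ge hab)).symm
  by_contra hne
  have hlt : a < b := hab.lt_of_ne hne
  have hda : deriv f a = 0 := (ha.isLocalMin (hs.mem_nhds has)).deriv_eq_zero
  have hdb : deriv f b = 0 := (hb.isLocalMin (hs.mem_nhds hbs)).deriv_eq_zero
  obtain ⟨c, hc, hdc⟩ := exists_deriv_eq_zero hlt
    (hf.mono (hf'.1.ordConnected.out has hbs)) (le_antisymm (ha hbs) (hb has))
  have hdc_neg : deriv f c < max (deriv f a) (deriv f b) :=
    hf'.lt_on_openSegment has hbs hne (by rwa [openSegment_eq_Ioo hlt])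
  simp [hda, hdb, hdc] at hdc_neg

/-- The value `τ` of `|m|` at which `0` and a nonzero point can both minimize `phi m lam q`. -/
noncomputable def threshold (lam q : ℝ) : ℝ :=
  (1 - q / 2) * lam ^ (1 / (2 - q)) * (1 - q) ^ ((q - 1) / (2 - q))

theorem threshold_eq_mul_rpow_div {lam q : ℝ} (hlam : 0 ≤ lam) (hq1 : q < 1) :
    threshold lam q = (1 - q / 2) * ((lam * (1 - q)) ^ (1 / (2 - q)) / (1 - q)) := by
  have h1q : 0 < 1 - q := by linarith
  have h2q : 2 - q ≠ 0 := by linarith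
  have hexp : (q - 1) / (2 - q) = 1 / (2 - q) - 1 := by field_simp; ring
  rw [threshold, hexp, Real.rpow_sub_one h1q.ne', Real.mul_rpow hlam h1q.le]
  ring

section Minimizers

variable {m lam q b ρ σ : ℝ}

theorem phi_neg_neg (m lam q ρ : ℝ) : phi (-m) lam q (-ρ) = phi m lam q ρ := by
  rw [phi, phi, abs_neg]; ring

theorem phi_zero_right (hq : q ≠ 0) : phi m lam q 0 = m ^ 2 := by
  simp [phi, Real.zero_rpow hq]

theorem continuous_phi (hq : 0 ≤ q) : Continuous (phi m lam q) := by
  have hpow : Continuous fun x : ℝ ↦ |x| ^ q := continuous_abs.rpow_const fun _ ↦ Or.inr hq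
  exact ((continuous_const.sub continuous_id).pow 2).add (continuous_const.mul hpow)

theorem tendsto_phi_cocompact_atTop (hlam : 0 ≤ lam) :
    Tendsto (phi m lam q) (cocompact ℝ) atTop := by
  have hsq : Tendsto (fun ρ ↦ dist m ρ ^ 2) (cocompact ℝ) atTop :=
    (tendsto_pow_atTop two_ne_zero).comp (tendsto_dist_left_cocompact_atTop m)
  refine tendsto_atTop_mono (fun ρ ↦ ?_) hsq
  rw [Real.dist_eq, sq_abs, phi]
  exact le_add_of_nonneg_right (by positivity)

theorem hasDerivAt_phi (hρ : 0 < ρ) :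
    HasDerivAt (phi m lam q) (2 * (ρ - m) + lam * q * ρ ^ (q - 1)) ρ := by
  have hsq := ((hasDerivAt_id ρ).const_sub m).pow 2
  have hpow := (Real.hasDerivAt_rpow_const (p := q) (Or.inl hρ.ne')).const_mul lam
  have hphi : phi m lam q =ᶠ[𝓝 ρ] fun x ↦ (m - x) ^ 2 + lam * x ^ q := by
    filter_upwards [lt_mem_nhds hρ] with x hx
    rw [phi, abs_of_pos hx]
  refine ((hsq.add hpow).congr_of_eventuallyEq hphi).congr_deriv ?_
  simp only [id_eq]
  ring

theorem strictConvexOn_deriv_phi (hlam : 0 < lam) (hq : 0 < q) (hq1 : q < 1) :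
    StrictConvexOn ℝ (Ioi 0) (deriv (phi m lam q)) := by
  have hlin : ConvexOn ℝ (Ioi 0) fun x : ℝ ↦ 2 * (x - m) :=
    ((convexOn_id (convex_Ioi 0)).sub (concaveOn_const m (convex_Ioi 0))).smul zero_le_two
  have hpow : StrictConvexOn ℝ (Ioi 0) fun x : ℝ ↦ lam * q * x ^ (q - 1) :=
    strictConvexOn_const_mul (mul_pos hlam hq) (strictConvexOn_rpow_of_neg (by linarith))
  exact (hlin.add_strictConvexOn hpow).congr fun x hx ↦ (hasDerivAt_phi hx).deriv.symm

theorem exists_isMinOn_phi (hlam : 0 ≤ lam) (hq : 0 ≤ q) :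
    ∃ ρ, IsMinOn (phi m lam q) univ ρ := by
  simpa only [isMinOn_univ_iff] using
    (continuous_phi hq).exists_forall_le (tendsto_phi_cocompact_atTop hlam)

theorem isMinOn_phi_neg (h : IsMinOn (phi m lam q) univ ρ) :
    IsMinOn (phi (-m) lam q) univ (-ρ) := by
  rw [isMinOn_univ_iff] at h ⊢
  intro x
  rw [phi_neg_neg, ← neg_neg x, phi_neg_neg]
  exact h (-x)

theorem nonneg_of_isMinOn_phi (hlam : 0 ≤ lam) (hq : q ≠ 0) (hm : 0 ≤ m)
    (h : IsMinOn (phi m lam q) univ ρ) : 0 ≤ ρ := by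
  by_contra! hρ
  have hle : phi m lam q ρ ≤ m ^ 2 := phi_zero_right (lam := lam) hq ▸ h (mem_univ 0)
  have hpen : 0 ≤ lam * |ρ| ^ q := by positivity
  rw [phi] at hle
  nlinarith

theorem eq_threshold_of_isMinOn_zero_of_isMinOn_pos (hq : q ≠ 0) (hq1 : q < 1) (hb : 0 < b)
    (hmin0 : IsMinOn (phi m lam q) univ 0) (hminb : IsMinOn (phi m lam q) univ b) :
    m = threshold lam q := by
  have h1q : 0 < 1 - q := by linarith
  have h2q : 2 - q ≠ 0 := by linarith
  have hcrit : 2 * (b - m) + lam * q * b ^ (q - 1) = 0 :=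
    (hminb.isLocalMin univ_mem).hasDerivAt_eq_zero (hasDerivAt_phi hb)
  have htie : b - 2 * m + lam * b ^ (q - 1) = 0 := by
    have heq : phi m lam q b = phi m lam q 0 :=
      le_antisymm (hminb (mem_univ 0)) (hmin0 (mem_univ b))
    rw [phi_zero_right hq, phi, abs_of_pos hb] at heq
    rw [Real.rpow_sub_one hb.ne']
    field_simp
    linear_combination heq
  have hpow : lam * (1 - q) = b ^ (2 - q) := by
    have hsplit : b ^ (2 - q) * b ^ (q - 1) = b := by
      rw [← Real.rpow_add hb]; norm_num
    refine mul_right_cancel₀ (Real.rpow_pos_of_pos hb (q - 1)).ne' ?_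
    linear_combination htie - hcrit - hsplit
  have hlam : 0 ≤ lam := nonneg_of_mul_nonneg_left (hpow ▸ by positivity) h1q
  have hroot : (b ^ (2 - q)) ^ (1 / (2 - q)) = b := by
    rw [one_div, Real.rpow_rpow_inv hb.le h2q]
  rw [threshold_eq_mul_rpow_div hlam hq1, hpow, hroot]
  field_simp
  linear_combination q * htie - hcrit

theorem isMinOn_phi_unique (hlam : 0 < lam) (hq : 0 < q) (hq1 : q < 1)
    (hm : |m| ≠ threshold lam q) (hρ : IsMinOn (phi m lam q) univ ρ)
    (hσ : IsMinOn (phi m lam q) univ σ) : ρ = σ := by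
  wlog hm0 : 0 ≤ m generalizing m ρ σ
  · exact neg_injective <| this (by rwa [abs_neg]) (isMinOn_phi_neg hρ) (isMinOn_phi_neg hσ)
      (by linarith)
  rw [abs_of_nonneg hm0] at hm
  rcases (nonneg_of_isMinOn_phi hlam.le hq.ne' hm0 hρ).eq_or_lt with rfl | hρ0 <;>
    rcases (nonneg_of_isMinOn_phi hlam.le hq.ne' hm0 hσ).eq_or_lt with rfl | hσ0
  · rfl
  · exact absurd (eq_threshold_of_isMinOn_zero_of_isMinOn_pos hq.ne' hq1 hσ0 hρ hσ) hm
  · exact absurd (eq_threshold_of_isMinOn_zero_of_isMinOn_pos hq.ne' hq1 hρ0 hσ hρ) hm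
  · exact isMinOn_unique_of_strictConvexOn_deriv isOpen_Ioi (continuous_phi hq.le).continuousOn
      (strictConvexOn_deriv_phi hlam hq hq1) hρ0 hσ0
      (hρ.on_subset (subset_univ _)) (hσ.on_subset (subset_univ _))

end Minimizers

theorem stmt0_general {m lam q : ℝ} (hlam : 0 < lam) (hq : 0 < q) (hq1 : q < 1)
    (hm : |m| ≠ threshold lam q) :
    ∃! ρ : ℝ, ∀ x : ℝ, phi m lam q ρ ≤ phi m lam q x := by
  obtain ⟨ρ, hρ⟩ := exists_isMinOn_phi (m := m) hlam.le hq.le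
  exact ⟨ρ, isMinOn_univ_iff.1 hρ, fun σ hσ ↦
    isMinOn_phi_unique hlam hq hq1 hm (isMinOn_univ_iff.2 hσ) hρ⟩

/-- For `L ≥ 3`, `λ > 0`, `q = 2/L`, if `|m| ≠ τ` where
`τ = (1 − q/2)·λ^{1/(2−q)}·(1 − q)^{(q−1)/(2−q)}`, then `φ_m` has a unique
global minimizer over `ℝ`. -/
theorem stmt0 (L : ℕ) (hL : 3 ≤ L) (lam : ℝ) (hlam : 0 < lam) (m q τ : ℝ)
    (hq : q = 2 / L)
    (hτ : τ = (1 - q / 2) * lam ^ (1 / (2 - q)) * (1 - q) ^ ((q - 1) / (2 - q)))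
    (hm : |m| ≠ τ) :
    ∃! ρ : ℝ, ∀ x : ℝ, phi m lam q ρ ≤ phi m lam q x := by
  have hL' : (3 : ℝ) ≤ L := by exact_mod_cast hL
  have hq0 : 0 < q := by rw [hq]; positivity
  have hq1 : q < 1 := by rw [hq, div_lt_one (by linarith)]; linarith
  exact stmt0_general hlam hq0 hq1 fun h ↦ hm (h.trans hτ.symm)
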